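/- Let N be a positive integer and for each i ∈ {1, …, N} let k_{h,i} > 0 and ω_{h,i} ≥ 0 be real numbers, and let e_i, x_{h,i}, d_i be real numbers such that either (integrator mode) d_i = ω_{h,i}·e_i and e_i·x_{h,i} ≥ (1/k_{h,i})·x_{h,i}², or (gain mode) x_{h,i} = k_{h,i}·e_i. Then Σ_{i=1}^N (1/k_{h,i})·x_{h,i}·d_i ≤ Σ_{i=1}^N e_i·d_i. In other words, the multi-HIGS with state derivative (d_1, …, d_N) satisfies V̂̇(X_h) ≤ E_hᵀU̇_h for the storage function V̂(X_h) = ½·X_hᵀK_h⁻¹X_h, where K_h = diag(k_{h,1}, …, k_{h,N}), so the multi-HIGS is a nonlinear negative imaginary system. -/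

import Mathlib

open scoped BigOperators

/-!
The claim holds channel by channel. With the normalized state `y = x / k`, the required inequality
is `y * d ≤ e * d`. In gain mode `y = e`. In integrator mode the sector constraint becomes
`y ^ 2 ≤ e * y`, which puts `y` between `0` and `e`, so that `e * y ≤ e ^ 2`; multiplying by the
integrator frequency gives the claim.
-/

theorem mul_le_sq_of_sq_le_mul {R : Type*} [CommRing R] [LinearOrder R] [IsStrictOrderedRing R]
    {a b : R} (h : b ^ 2 ≤ a * b) : a * b ≤ a ^ 2 := by
  linarith [sq_nonneg (a - b), sub_sq a b]

namespace HIGS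

variable {F : Type*} [Field F] {k ω e x d : F}

/-- Gain mode of a HIGS element with gain `k`, at input `e` and state `x`. It leaves the state
derivative unconstrained. -/
def GainMode (k e x : F) : Prop :=
  x = k * e

theorem GainMode.storage_rate_eq (h : GainMode k e x) (hk : k ≠ 0) (d : F) :
    (1 / k) * x * d = e * d := by
  have normalized_state : (1 / k) * x = e := by
    rw [h, one_div, inv_mul_cancel_left₀ hk]
  rw [normalized_state]

variable [LinearOrder F]

/-- Integrator mode of a HIGS element with gain `k` and integrator frequency `ω`, at input `e` and
state `x`. The state derivative enters only through its current value `d`. -/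
def IntegratorMode (k ω e x d : F) : Prop :=
  d = ω * e ∧ e * x ≥ (1 / k) * x ^ 2

variable [IsStrictOrderedRing F]

theorem IntegratorMode.sq_normalized_state_le (h : IntegratorMode k ω e x d) (hk : 0 < k) :
    ((1 / k) * x) ^ 2 ≤ e * ((1 / k) * x) :=
  calc ((1 / k) * x) ^ 2 = (1 / k) * ((1 / k) * x ^ 2) := by ring
    _ ≤ (1 / k) * (e * x) := mul_le_mul_of_nonneg_left h.2 (one_div_pos.2 hk).le
    _ = e * ((1 / k) * x) := by ring

theorem IntegratorMode.storage_rate_le (h : IntegratorMode k ω e x d) (hk : 0 < k) (hω : 0 ≤ ω) :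
    (1 / k) * x * d ≤ e * d :=
  calc (1 / k) * x * d = ω * (e * ((1 / k) * x)) := by rw [h.1]; ring
    _ ≤ ω * e ^ 2 :=
      mul_le_mul_of_nonneg_left (mul_le_sq_of_sq_le_mul (h.sq_normalized_state_le hk)) hω
    _ = e * d := by rw [h.1]; ring

end HIGS

theorem multi_higs_nni_general {ι F : Type*} [Field F] [LinearOrder F] [IsStrictOrderedRing F]
    (s : Finset ι) (k ω e x d : ι → F) (hk : ∀ i ∈ s, 0 < k i) (hω : ∀ i ∈ s, 0 ≤ ω i)
    (hmode : ∀ i ∈ s, HIGS.IntegratorMode (k i) (ω i) (e i) (x i) (d i) ∨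
      HIGS.GainMode (k i) (e i) (x i)) :
    ∑ i ∈ s, (1 / k i) * x i * d i ≤ ∑ i ∈ s, e i * d i := by
  refine Finset.sum_le_sum fun i hi => ?_
  rcases hmode i hi with integrator | gain
  · exact integrator.storage_rate_le (hk i hi) (hω i hi)
  · exact (gain.storage_rate_eq (hk i hi).ne' (d i)).le

/-- A multi-HIGS (the parallel connection of `N` HIGS elements) is nonlinear negative
imaginary: if each channel is in integrator mode (derivative `dᵢ = ω_{h,i}·eᵢ` and the
sector constraint holds) or in gain mode (`x_{h,i} = k_{h,i}·eᵢ`), then the storage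
function `V̂(X_h) = ½·X_hᵀK_h⁻¹X_h` satisfies
`V̂̇ = Σᵢ (1/k_{h,i})·x_{h,i}·dᵢ ≤ Σᵢ eᵢ·dᵢ = E_hᵀU̇_h`. -/
theorem multi_higs_nni (N : ℕ) (hN : 0 < N)
    (k ω e x d : Fin N → ℝ)
    (hk : ∀ i, 0 < k i) (hω : ∀ i, 0 ≤ ω i)
    (hmode : ∀ i, (d i = ω i * e i ∧ e i * x i ≥ (1 / k i) * (x i) ^ 2) ∨
      x i = k i * e i) :
    ∑ i, (1 / k i) * x i * d i ≤ ∑ i, e i * d i := by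
  exact multi_higs_nni_general Finset.univ k ω e x d (fun i _ => hk i) (fun i _ => hω i)
    fun i _ => hmode i
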